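/- The generalized Lévy operator L is positive on smooth compactly supported functions: for every real-valued f ∈ C_c^∞(ℝ^d), ∫_{ℝ^d} f(x) Lf(x) dx ≥ 0. -/

import Mathlib

open scoped BigOperators
open MeasureTheory

noncomputable section

/-- The compensated integrand `f(x+y) − f(x) − Σ_{i=1}^{2l} (1/i!) Dⁱf(x)[y,…,y]`. -/
def levyIntegrand {d : ℕ} (l : ℕ) (f : EuclideanSpace ℝ (Fin d) → ℝ)
    (x y : EuclideanSpace ℝ (Fin d)) : ℝ :=
  f (x + y) - f x - ∑ i ∈ Finset.Icc 1 (2 * l),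
    (1 / (i.factorial : ℝ)) * iteratedFDeriv ℝ i f x (fun _ => y)

/-- The density `h(y)|y|^{−(2l+1+α)}` of the Lévy measure. -/
def levyWeight {d : ℕ} (l : ℕ) (α : ℝ) (h : EuclideanSpace ℝ (Fin d) → ℝ)
    (y : EuclideanSpace ℝ (Fin d)) : ℝ :=
  h y * ‖y‖ ^ (-(2 * (l : ℝ) + 1 + α))

/-- The generalized Lévy operator
`Lf(x) = (−1)^{l+1} ∫ (f(x+y) − f(x) − Σ_{i=1}^{2l} (1/i!) Dⁱf(x)[y,…,y]) h(y)|y|^{−(2l+1+α)} dy`. -/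
def levyOp {d : ℕ} (l : ℕ) (α : ℝ) (h : EuclideanSpace ℝ (Fin d) → ℝ)
    (f : EuclideanSpace ℝ (Fin d) → ℝ) (x : EuclideanSpace ℝ (Fin d)) : ℝ :=
  (-1 : ℝ) ^ (l + 1) * ∫ y, levyIntegrand l f x y * levyWeight l α h y

/-- Taylor's formula with Lagrange remainder for a chain of derivatives. -/
theorem chain_taylor (P : ℕ → ℝ → ℝ) (hP : ∀ i t, HasDerivAt (P i) (P (i + 1) t) t) (n : ℕ) :
    ∃ ξ : ℝ, P 0 1 - ∑ i ∈ Finset.range (n + 1), (1 / (i.factorial : ℝ)) * P i 0 =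
      P (n + 1) ξ / ((n + 1).factorial : ℝ) := by
  have h1 : ∀ k, iteratedDeriv k (P 0) = P k := by
    intro k
    induction k with
    | zero => simp
    | succ k ih =>
      rw [iteratedDeriv_succ, ih]
      ext t
      exact (hP k t).deriv
  have hc : ContDiff ℝ (⊤ : ℕ∞) (P 0) := by
    apply contDiff_of_differentiable_iteratedDeriv
    intro m _
    rw [h1]
    exact fun t => (hP m t).differentiableAt
  have hu : UniqueDiffOn ℝ (Set.uIcc (0 : ℝ) 1) := by
    rw [Set.uIcc_of_le zero_le_one]
    exact uniqueDiffOn_Icc zero_lt_one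
  have h2 : ∀ k, ∀ t ∈ Set.uIcc (0 : ℝ) 1,
      iteratedDerivWithin k (P 0) (Set.uIcc (0 : ℝ) 1) t = P k t := by
    intro k t ht
    rw [iteratedDerivWithin_eq_iteratedDeriv hu
      ((hc.of_le (by exact_mod_cast le_top)).contDiffAt) ht, h1]
  obtain ⟨ξ, hξ, h⟩ := taylor_mean_remainder_lagrange (f := P 0) (x := 1) (x₀ := 0) (n := n)
    zero_ne_one (hc.of_le (by exact_mod_cast le_top)).contDiffOn (by
      have : DifferentiableOn ℝ (P n) (Set.uIoo (0 : ℝ) 1) :=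
        fun t _ => (hP n t).differentiableAt.differentiableWithinAt
      exact this.congr fun t ht => h2 n t (Set.Ioo_subset_Icc_self ht))
  refine ⟨ξ, ?_⟩
  rw [h2 _ _ (Set.Ioo_subset_Icc_self hξ), taylor_within_apply] at h
  simp only [sub_zero, one_pow, mul_one, smul_eq_mul] at h
  rw [← h]
  congr 1
  apply Finset.sum_congr rfl
  intro i _
  rw [h2 _ _ (by simp), one_div]

section helpers
variable {d : ℕ}

/-- The `i`-th directional derivative of `f` in direction `y`. -/
def dirD (f : EuclideanSpace ℝ (Fin d) → ℝ) (i : ℕ) (y x : EuclideanSpace ℝ (Fin d)) : ℝ :=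
  iteratedFDeriv ℝ i f x (fun _ => y)

variable {f : EuclideanSpace ℝ (Fin d) → ℝ}

theorem dirD_zero (y x : EuclideanSpace ℝ (Fin d)) : dirD f 0 y x = f x := by
  simp [dirD]

theorem dirD_hasFDerivAt (hf : ContDiff ℝ (⊤ : ℕ∞) f) (i : ℕ) (y x : EuclideanSpace ℝ (Fin d)) :
    HasFDerivAt (dirD f i y) ((ContinuousMultilinearMap.apply ℝ
      (fun _ : Fin i => EuclideanSpace ℝ (Fin d)) ℝ (fun _ => y)).comp
        (fderiv ℝ (iteratedFDeriv ℝ i f) x)) x := by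
  have h1 : DifferentiableAt ℝ (iteratedFDeriv ℝ i f) x :=
    (hf.differentiable_iteratedFDeriv (by exact_mod_cast WithTop.coe_lt_top i)) x
  exact (ContinuousLinearMap.hasFDerivAt (ContinuousMultilinearMap.apply ℝ
      (fun _ : Fin i => EuclideanSpace ℝ (Fin d)) ℝ (fun _ => y))).comp x h1.hasFDerivAt

theorem dirD_fderiv (hf : ContDiff ℝ (⊤ : ℕ∞) f) (i : ℕ) (y x : EuclideanSpace ℝ (Fin d)) :
    fderiv ℝ (dirD f i y) x y = dirD f (i + 1) y x := by
  rw [(dirD_hasFDerivAt hf i y x).fderiv]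
  rfl

theorem dirD_line (hf : ContDiff ℝ (⊤ : ℕ∞) f) (i : ℕ) (y x : EuclideanSpace ℝ (Fin d)) (t : ℝ) :
    HasDerivAt (fun t : ℝ => dirD f i y (x + t • y)) (dirD f (i + 1) y (x + t • y)) t := by
  have h1 : HasDerivAt (fun t : ℝ => x + t • y) y t := by
    simpa using ((hasDerivAt_id t).smul_const y).const_add x
  have h2 := (dirD_hasFDerivAt hf i y (x + t • y)).differentiableAt.hasFDerivAt
  have h3 := h2.comp_hasDerivAt t h1
  rw [dirD_fderiv hf] at h3
  exact h3

theorem dirD_cont2 (hf : ContDiff ℝ (⊤ : ℕ∞) f) (i : ℕ) :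
    Continuous (fun p : EuclideanSpace ℝ (Fin d) × EuclideanSpace ℝ (Fin d) =>
      dirD f i p.2 p.1) := by
  have h1 : Continuous (iteratedFDeriv ℝ i f) :=
    hf.continuous_iteratedFDeriv (by exact_mod_cast le_top)
  unfold dirD
  have h2 : Continuous (fun p : EuclideanSpace ℝ (Fin d) × EuclideanSpace ℝ (Fin d) =>
      iteratedFDeriv ℝ i f p.1) := h1.comp continuous_fst
  exact h2.eval (by fun_prop)

theorem dirD_cont (hf : ContDiff ℝ (⊤ : ℕ∞) f) (i : ℕ) (y : EuclideanSpace ℝ (Fin d)) :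
    Continuous (dirD f i y) :=
  (dirD_cont2 hf i).comp (Continuous.prodMk continuous_id continuous_const)

theorem dirD_supp (hs : HasCompactSupport f) (i : ℕ) (y : EuclideanSpace ℝ (Fin d)) :
    HasCompactSupport (dirD f i y) :=
  (hs.iteratedFDeriv (𝕜 := ℝ) i).comp_left
    (g := fun m : ContinuousMultilinearMap ℝ (fun _ : Fin i => EuclideanSpace ℝ (Fin d)) ℝ =>
      m (fun _ => y)) rfl

theorem dirD_mul_int (hf : ContDiff ℝ (⊤ : ℕ∞) f) (hs : HasCompactSupport f) (i j : ℕ)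
    (y v : EuclideanSpace ℝ (Fin d)) :
    Integrable (fun x => dirD f i y x * dirD f j y (x + v)) :=
  Continuous.integrable_of_hasCompactSupport
    ((dirD_cont hf i y).mul ((dirD_cont hf j y).comp (by fun_prop)))
    ((dirD_supp hs i y).mul_right)

/-- Autocorrelation-type function. -/
def corr (f : EuclideanSpace ℝ (Fin d) → ℝ) (y : EuclideanSpace ℝ (Fin d)) (i j : ℕ) (t : ℝ) : ℝ :=
  ∫ x, dirD f i y x * dirD f j y (x + t • y)

theorem corr_hasDerivAt (hf : ContDiff ℝ (⊤ : ℕ∞) f) (hs : HasCompactSupport f)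
    (y : EuclideanSpace ℝ (Fin d)) (i j : ℕ) (t : ℝ) :
    HasDerivAt (corr f y i j) (corr f y i (j + 1) t) t := by
  obtain ⟨C, hC⟩ := (dirD_cont hf (j + 1) y).bounded_above_of_compact_support (dirD_supp hs (j + 1) y)
  have b1 : ∀ᵐ x : EuclideanSpace ℝ (Fin d), ∀ s ∈ (Set.univ : Set ℝ),
      ‖dirD f i y x * dirD f (j + 1) y (x + s • y)‖ ≤ ‖dirD f i y x‖ * C := by
    refine Filter.Eventually.of_forall fun x s _ => ?_
    rw [norm_mul]
    exact mul_le_mul_of_nonneg_left (hC _) (norm_nonneg _)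
  have b2 : Integrable (fun x => ‖dirD f i y x‖ * C) :=
    ((Continuous.integrable_of_hasCompactSupport (dirD_cont hf i y)
      (dirD_supp hs i y)).norm).mul_const C
  have b3 : ∀ᵐ x : EuclideanSpace ℝ (Fin d), ∀ s ∈ (Set.univ : Set ℝ),
      HasDerivAt (fun s : ℝ => dirD f i y x * dirD f j y (x + s • y))
        (dirD f i y x * dirD f (j + 1) y (x + s • y)) s :=
    Filter.Eventually.of_forall fun x s _ => (dirD_line hf j y x s).const_mul _
  have b4 : ∀ᶠ s : ℝ in nhds t, AEStronglyMeasurable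
      (fun x => dirD f i y x * dirD f j y (x + s • y)) volume :=
    Filter.Eventually.of_forall fun s => (dirD_mul_int hf hs i j y (s • y)).aestronglyMeasurable
  have b5 := hasDerivAt_integral_of_dominated_loc_of_deriv_le (μ := volume)
    (F := fun (s : ℝ) x => dirD f i y x * dirD f j y (x + s • y))
    (F' := fun (s : ℝ) x => dirD f i y x * dirD f (j + 1) y (x + s • y))
    (bound := fun x => ‖dirD f i y x‖ * C) (s := Set.univ) (x₀ := t) Filter.univ_mem b4
    (dirD_mul_int hf hs i j y (t • y))
    (dirD_mul_int hf hs i (j + 1) y (t • y)).aestronglyMeasurable b1 b2 b3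
  exact b5.2

theorem corr_parts (hf : ContDiff ℝ (⊤ : ℕ∞) f) (hs : HasCompactSupport f)
    (y : EuclideanSpace ℝ (Fin d)) (i j : ℕ) (t : ℝ) :
    corr f y i (j + 1) t = - corr f y (i + 1) j t := by
  have hd : ∀ k x, DifferentiableAt ℝ (dirD f k y) x :=
    fun k x => (dirD_hasFDerivAt hf k y x).differentiableAt
  have key : ∀ x, fderiv ℝ (fun x => dirD f j y (x + t • y)) x y = dirD f (j + 1) y (x + t • y) := by
    intro x
    rw [fderiv_comp_add_right, dirD_fderiv hf]
  have := integral_mul_fderiv_eq_neg_fderiv_mul_of_integrable (μ := volume) (v := y)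
    (f := dirD f i y) (g := fun x => dirD f j y (x + t • y))
    (by simp only [dirD_fderiv hf]; exact dirD_mul_int hf hs _ _ _ _)
    (by simp only [key]; exact dirD_mul_int hf hs _ _ _ _)
    (dirD_mul_int hf hs _ _ _ _) (fun x _ => hd i x)
    (fun x _ => by
      rw [differentiableAt_comp_add_right]
      exact hd j _)
  simp only [key, dirD_fderiv hf] at this
  exact this

theorem corr_parts_iter (hf : ContDiff ℝ (⊤ : ℕ∞) f) (hs : HasCompactSupport f)
    (y : EuclideanSpace ℝ (Fin d)) (k i j : ℕ) (t : ℝ) :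
    corr f y i (j + k) t = (-1) ^ k * corr f y (i + k) j t := by
  induction k generalizing i with
  | zero => simp
  | succ k ih =>
    rw [← add_assoc, corr_parts hf hs, ih, pow_succ, show i + 1 + k = i + (k + 1) by ring]
    ring

theorem corr_le (hf : ContDiff ℝ (⊤ : ℕ∞) f) (hs : HasCompactSupport f)
    (y : EuclideanSpace ℝ (Fin d)) (i : ℕ) (t : ℝ) :
    corr f y i i t ≤ corr f y i i 0 := by
  have h0 : Integrable (fun x => dirD f i y x * dirD f i y x) := by
    simpa using dirD_mul_int hf hs i i y 0
  have h1 := h0.comp_add_right (t • y)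
  have h2 := integral_add_right_eq_self (μ := volume) (fun x => dirD f i y x * dirD f i y x) (t • y)
  have h3 : corr f y i i t ≤ ∫ x, (1 / 2 : ℝ) * ((dirD f i y x * dirD f i y x) +
      dirD f i y (x + t • y) * dirD f i y (x + t • y)) := by
    apply integral_mono (dirD_mul_int hf hs _ _ _ _) ((h0.add h1).const_mul _)
    intro x
    simp only [Pi.add_apply]
    nlinarith [sq_nonneg (dirD f i y x - dirD f i y (x + t • y))]
  rw [integral_const_mul, integral_add h0 h1, h2] at h3
  have h4 : corr f y i i 0 = ∫ x, dirD f i y x * dirD f i y x := by simp [corr]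
  rw [h4]
  linarith

theorem sum_Icc_range (l : ℕ) (a : ℕ → ℝ) (c : ℝ) :
    c - ∑ i ∈ Finset.range (2 * l + 1), (1 / (i.factorial : ℝ)) * a i =
    c - a 0 - ∑ i ∈ Finset.Icc 1 (2 * l), (1 / (i.factorial : ℝ)) * a i := by
  rw [Finset.range_eq_Ico, Finset.sum_eq_sum_Ico_succ_bot (by omega)]
  have : Finset.Ico (0 + 1) (2 * l + 1) = Finset.Icc 1 (2 * l) := by
    ext i
    simp only [Finset.mem_Ico, Finset.mem_Icc]
    omega
  rw [this]
  simp
  ring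

theorem levyIntegrand_eq (l : ℕ) (x y : EuclideanSpace ℝ (Fin d)) :
    levyIntegrand l f x y = f (x + y) -
      ∑ i ∈ Finset.range (2 * l + 1), (1 / (i.factorial : ℝ)) * dirD f i y x := by
  rw [sum_Icc_range l (fun i => dirD f i y x), dirD_zero]
  rfl

theorem inner_eq (hf : ContDiff ℝ (⊤ : ℕ∞) f) (hs : HasCompactSupport f) (l : ℕ)
    (y : EuclideanSpace ℝ (Fin d)) :
    ∫ x, f x * levyIntegrand l f x y = corr f y 0 0 1 -
      ∑ i ∈ Finset.range (2 * l + 1), (1 / (i.factorial : ℝ)) * corr f y 0 i 0 := by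
  have e : ∀ x, f x * levyIntegrand l f x y = dirD f 0 y x * dirD f 0 y (x + (1 : ℝ) • y) -
      ∑ i ∈ Finset.range (2 * l + 1), (1 / (i.factorial : ℝ)) *
        (dirD f 0 y x * dirD f i y (x + (0 : ℝ) • y)) := by
    intro x
    rw [levyIntegrand_eq, mul_sub, Finset.mul_sum]
    simp only [dirD_zero, one_smul, zero_smul, add_zero]
    congr 1
    exact Finset.sum_congr rfl fun i _ => by ring
  simp only [e]
  rw [integral_sub (dirD_mul_int hf hs _ _ _ _)
    (integrable_finsetSum _ fun i _ => (dirD_mul_int hf hs _ _ _ _).const_mul _),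
    integral_finsetSum _ fun i _ => (dirD_mul_int hf hs _ _ _ _).const_mul _]
  simp only [integral_const_mul]
  rfl

theorem inner_nonneg' (hf : ContDiff ℝ (⊤ : ℕ∞) f) (hs : HasCompactSupport f) (l : ℕ)
    (y : EuclideanSpace ℝ (Fin d)) :
    0 ≤ (-1 : ℝ) ^ (l + 1) * ∫ x, f x * levyIntegrand l f x y := by
  rw [inner_eq hf hs]
  have key : ∃ ξ : ℝ, corr f y 0 0 1 -
      ∑ i ∈ Finset.range (2 * l + 1), (1 / (i.factorial : ℝ)) * corr f y 0 i 0 =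
      (corr f y 0 (2 * l) ξ - corr f y 0 (2 * l) 0) / ((2 * l).factorial : ℝ) := by
    rcases l with _ | l
    · exact ⟨1, by simp⟩
    · obtain ⟨ξ, h⟩ := chain_taylor (fun i => corr f y 0 i)
        (fun i t => corr_hasDerivAt hf hs y 0 i t) (2 * l + 1)
      refine ⟨ξ, ?_⟩
      rw [Finset.sum_range_succ, ← sub_sub]
      rw [show 2 * (l + 1) = 2 * l + 1 + 1 by ring, h]
      ring
  obtain ⟨ξ, h⟩ := key
  have e : ∀ t, corr f y 0 (2 * l) t = (-1) ^ l * corr f y l l t := by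
    intro t
    rw [two_mul, corr_parts_iter hf hs, zero_add]
  rw [h, e, e, ← mul_sub, mul_div_assoc, ← mul_assoc]
  have : (-1 : ℝ) ^ (l + 1) * (-1) ^ l = -1 := by
    rw [← pow_add, Odd.neg_one_pow ⟨l, by ring⟩]
  rw [this, neg_one_mul, ← neg_div, neg_sub]
  exact div_nonneg (sub_nonneg.2 (corr_le hf hs y l ξ)) (by positivity)

theorem levyIntegrand_bound (hf : ContDiff ℝ (⊤ : ℕ∞) f) (hs : HasCompactSupport f) (l : ℕ) :
    ∃ C : ℝ, 0 ≤ C ∧ ∀ x y, |levyIntegrand l f x y| ≤ C * ‖y‖ ^ (2 * l + 1) := by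
  have hcont : ∀ n : ℕ, Continuous (iteratedFDeriv ℝ n f) := fun n =>
    hf.continuous_iteratedFDeriv (by exact_mod_cast le_top)
  obtain ⟨C, hC⟩ := (hcont (2 * l + 1)).bounded_above_of_compact_support
    (hs.iteratedFDeriv (𝕜 := ℝ) (2 * l + 1))
  refine ⟨C, (norm_nonneg _).trans (hC 0), fun x y => ?_⟩
  obtain ⟨ξ, h⟩ := chain_taylor (fun i t => dirD f i y (x + t • y))
    (fun i t => dirD_line hf i y x t) (2 * l)
  simp only [dirD_zero, one_smul, zero_smul, add_zero] at h
  rw [levyIntegrand_eq, h, abs_div]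
  have h1 : |dirD f (2 * l + 1) y (x + ξ • y)| ≤ C * ‖y‖ ^ (2 * l + 1) := by
    have := (iteratedFDeriv ℝ (2 * l + 1) f (x + ξ • y)).le_opNorm (fun _ => y)
    simp only [Finset.prod_const, Finset.card_univ, Fintype.card_fin] at this
    exact this.trans (mul_le_mul_of_nonneg_right (hC _) (by positivity))
  refine (div_le_self (abs_nonneg _) ?_).trans h1
  rw [Nat.abs_cast]
  exact_mod_cast Nat.one_le_iff_ne_zero.2 (Nat.factorial_ne_zero _)

theorem levyIntegrand_cont (hf : ContDiff ℝ (⊤ : ℕ∞) f) (l : ℕ) :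
    Continuous (fun p : EuclideanSpace ℝ (Fin d) × EuclideanSpace ℝ (Fin d) =>
      levyIntegrand l f p.1 p.2) := by
  simp only [levyIntegrand_eq]
  have := hf.continuous
  exact (this.comp (by fun_prop)).sub (continuous_finsetSum _ fun i _ =>
    continuous_const.mul (dirD_cont2 hf i))

end helpers

/-- the generalized Lévy operator is positive on `C_c^∞(ℝ^d)`:
`∫ f(x) Lf(x) dx ≥ 0`. -/
theorem levyOp_positive
    (d l : ℕ) (α : ℝ) (hα : α ∈ Set.Ioo (-1 : ℝ) 0)
    (h : EuclideanSpace ℝ (Fin d) → ℝ)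
    (hmeas : Measurable h) (hpos : ∀ y, 0 ≤ h y)
    (M : ℝ) (hbd : ∀ y, h y ≤ M)
    (hsymm : ∀ y, h (-y) = h y)
    (R : ℝ) (hR : 0 < R) (hvan : ∀ y : EuclideanSpace ℝ (Fin d), R < ‖y‖ → h y = 0)
    (f : EuclideanSpace ℝ (Fin d) → ℝ)
    (hf : ContDiff ℝ (⊤ : ℕ∞) f) (hfsupp : HasCompactSupport f) :
    0 ≤ ∫ x, f x * levyOp l α h f x := by
  obtain ⟨hα1, hα0⟩ := hα
  obtain ⟨C, hC0, hC⟩ := levyIntegrand_bound hf hfsupp l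
  obtain ⟨A, hA⟩ := hf.continuous.bounded_above_of_compact_support hfsupp
  have hM : 0 ≤ M := (hpos 0).trans (hbd 0)
  have hw0 : ∀ y, 0 ≤ levyWeight l α h y := fun y =>
    mul_nonneg (hpos y) (Real.rpow_nonneg (norm_nonneg _) _)
  have hwm : Measurable (levyWeight l α h) := by
    unfold levyWeight
    exact hmeas.mul (measurable_norm.pow_const _)
  have hbound : ∀ x y, |levyIntegrand l f x y * levyWeight l α h y| ≤ C * M * R ^ (-α) := by
    intro x y
    rcases lt_or_ge R ‖y‖ with hy | hy
    · have : levyWeight l α h y = 0 := by simp [levyWeight, hvan y hy]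
      rw [this, mul_zero, abs_zero]
      positivity
    · rw [abs_mul, abs_of_nonneg (hw0 y)]
      rcases eq_or_ne y 0 with rfl | hy0
      · have : levyWeight l α h (0 : EuclideanSpace ℝ (Fin d)) = 0 := by
          unfold levyWeight
          rw [norm_zero, Real.zero_rpow, mul_zero]
          have : (0 : ℝ) ≤ l := Nat.cast_nonneg l
          intro h0
          linarith
        rw [this, mul_zero]
        positivity
      · have hn : 0 < ‖y‖ := norm_pos_iff.2 hy0
        have e : ‖y‖ ^ (2 * l + 1) * ‖y‖ ^ (-(2 * (l : ℝ) + 1 + α)) = ‖y‖ ^ (-α) := by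
          rw [← Real.rpow_natCast, ← Real.rpow_add hn]
          congr 1
          push_cast
          ring
        calc |levyIntegrand l f x y| * levyWeight l α h y
            ≤ (C * ‖y‖ ^ (2 * l + 1)) * (M * ‖y‖ ^ (-(2 * (l : ℝ) + 1 + α))) := by
              apply mul_le_mul (hC x y) _ (hw0 y) (by positivity)
              exact mul_le_mul_of_nonneg_right (hbd y) (by positivity)
          _ = C * M * ‖y‖ ^ (-α) := by rw [← e]; ring
          _ ≤ C * M * R ^ (-α) := by
              apply mul_le_mul_of_nonneg_left _ (by positivity)
              exact Real.rpow_le_rpow hn.le hy (by linarith)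
  have hA0 : 0 ≤ A := (norm_nonneg _).trans (hA 0)
  have hint : Integrable (Function.uncurry fun x y =>
      f x * (levyIntegrand l f x y * levyWeight l α h y)) (volume.prod volume) := by
    have hmeasF : Measurable (Function.uncurry fun x y =>
        f x * (levyIntegrand l f x y * levyWeight l α h y)) := by
      exact (hf.continuous.measurable.comp measurable_fst).mul
        ((levyIntegrand_cont hf l).measurable.mul (hwm.comp measurable_snd))
    have hK : IsCompact (tsupport f ×ˢ Metric.closedBall (0 : EuclideanSpace ℝ (Fin d)) R) :=
      hfsupp.isCompact.prod (isCompact_closedBall _ _)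
    have hon : IntegrableOn (Function.uncurry fun x y =>
        f x * (levyIntegrand l f x y * levyWeight l α h y))
        (tsupport f ×ˢ Metric.closedBall (0 : EuclideanSpace ℝ (Fin d)) R)
        (volume.prod volume) := by
      refine Measure.integrableOn_of_bounded (M := A * (C * M * R ^ (-α))) hK.measure_lt_top.ne
        hmeasF.aestronglyMeasurable (Filter.Eventually.of_forall ?_)
      rintro ⟨x, y⟩
      simp only [Function.uncurry_apply_pair]
      rw [norm_mul]
      exact mul_le_mul (hA x) (hbound x y) (norm_nonneg _) hA0
    rw [← integrableOn_iff_integrable_of_support_subset]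
    · exact hon
    · rintro ⟨x, y⟩ hxy
      simp only [Function.mem_support, Function.uncurry_apply_pair] at hxy
      refine ⟨subset_tsupport f fun h0 => hxy (by rw [h0, zero_mul]), ?_⟩
      rw [mem_closedBall_zero_iff]
      by_contra hy
      exact hxy (by simp [levyWeight, hvan y (not_le.1 hy)])
  have e1 : ∫ x, f x * levyOp l α h f x =
      (-1 : ℝ) ^ (l + 1) * ∫ x, ∫ y, f x * (levyIntegrand l f x y * levyWeight l α h y) := by
    rw [← integral_const_mul]
    congr 1
    ext x
    rw [integral_const_mul, levyOp]
    ring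
  rw [e1, integral_integral_swap hint, ← integral_const_mul]
  apply integral_nonneg
  intro y
  have e2 : ∫ x, f x * (levyIntegrand l f x y * levyWeight l α h y) =
      (∫ x, f x * levyIntegrand l f x y) * levyWeight l α h y := by
    rw [← integral_mul_const]
    congr 1
    ext x
    ring
  simp only [Pi.zero_apply]
  rw [e2, ← mul_assoc]
  exact mul_nonneg (inner_nonneg' hf hfsupp l y) (hw0 y)
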